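/- Let μ be a positive pluriharmonic measure on the unit sphere S_n (n ≥ 2), i.e., its Poisson integral is pluriharmonic on B_n. Then the singular part μ^s of μ (with respect to normalized surface measure Σ) is totally singular: μ^s ⊥ ρ for every probability measure ρ on S_n representing the origin for the ball algebra A(B_n). -/

import Mathlib

open Complex Metric MeasureTheory Set

/-!
Let `P` be the Poisson–Szegő kernel and `τ ≤ μ, ρ`; it suffices to show `τ ≪ σ`. As `P[μ]` is the
real part of a holomorphic function and `ρ` represents the origin, `∫∫ P(rζ, ξ) dμ(ξ) dρ(ζ)` is the
mass of `μ` for every `r < 1`, so off a set of `τ`-measure at most `‖μ‖ / M` the dilated potential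
of `μ` is at most `M`. Let `ν` be the restriction of `τ` to the rest of a closed `σ`-null set `K`.
The quasi-triangle inequality for `1 / P(rζ, ξ)` bounds the square of the `L²(σ)` norm of the
potential of `ν` by a multiple of `M ‖ν‖`, whereas for `r` near `1` half of the mass of each
`P(rζ, ·) σ` with `ζ ∈ K` lies in a prescribed neighbourhood `V` of `K`. By Cauchy–Schwarz
`‖ν‖ ≲ M σ(V)`, hence `τ(K) ≲ M σ(V) + ‖μ‖ / M`; let `V` shrink to `K` and then `M → ∞`.
-/

open Filter Topology Function Module
open scoped ENNReal NNReal InnerProductSpace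

section Measure

variable {X : Type*} [MeasurableSpace X] {μ ρ σ τ : Measure X}

theorem sq_lintegral_le {f : X → ℝ≥0∞} (hf : AEMeasurable f μ) :
    (∫⁻ x, f x ∂μ) ^ 2 ≤ μ univ * ∫⁻ x, f x ^ 2 ∂μ := by
  have h := ENNReal.lintegral_mul_le_Lp_mul_Lq μ Real.HolderConjugate.two_two
    (aemeasurable_const (b := (1 : ℝ≥0∞))) hf
  simp only [Pi.mul_apply, one_mul, ENNReal.rpow_two, one_pow, lintegral_one, one_div] at h
  calc (∫⁻ x, f x ∂μ) ^ 2
      ≤ (μ univ ^ (2⁻¹ : ℝ) * (∫⁻ x, f x ^ 2 ∂μ) ^ (2⁻¹ : ℝ)) ^ 2 := by gcongr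
    _ = μ univ * ∫⁻ x, f x ^ 2 ∂μ := by
      simp only [mul_pow, ← ENNReal.rpow_two, ← ENNReal.rpow_mul]
      norm_num

theorem inv_two_le_setLIntegral [IsProbabilityMeasure σ] {f : X → ℝ≥0∞} (hf : ∫⁻ x, f x ∂σ = 1)
    {V : Set X} (hV : MeasurableSet V) (hfar : ∀ᵐ x ∂σ, x ∉ V → f x ≤ 2⁻¹) :
    2⁻¹ ≤ ∫⁻ x in V, f x ∂σ := by
  have hcompl : ∫⁻ x in Vᶜ, f x ∂σ ≤ 2⁻¹ :=
    calc ∫⁻ x in Vᶜ, f x ∂σ ≤ ∫⁻ _ in Vᶜ, 2⁻¹ ∂σ :=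
          setLIntegral_mono_ae measurable_const.aemeasurable hfar
      _ ≤ 2⁻¹ := by
          rw [setLIntegral_const]
          exact mul_le_of_le_one_right' prob_le_one
  rw [← ENNReal.add_le_add_iff_right (show (2⁻¹ : ℝ≥0∞) ≠ ∞ by simp), ENNReal.inv_two_add_inv_two,
    ← hf, ← lintegral_add_compl f hV]
  gcongr

theorem integrable_of_continuousOn_of_ae_mem [TopologicalSpace X] [OpensMeasurableSpace X]
    [T2Space X] {F : Type*} [NormedAddCommGroup F] [IsFiniteMeasure μ] {f : X → F} {K : Set X}
    (hK : IsCompact K) (hf : ContinuousOn f K) (hμ : ∀ᵐ x ∂μ, x ∈ K) : Integrable f μ := by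
  rw [← Measure.restrict_eq_self_of_ae_mem hμ]
  exact hf.integrableOn_compact hK

theorem eq_zero_of_forall_le_div {a b : ℝ≥0∞} (hb : b ≠ ∞)
    (h : ∀ M : ℝ≥0∞, M ≠ 0 → M ≠ ∞ → a ≤ b / M) : a = 0 := by
  have htend : Tendsto (fun m : ℕ ↦ b / m) atTop (𝓝 0) := by
    simpa using ENNReal.Tendsto.const_div ENNReal.tendsto_nat_nhds_top (.inr hb)
  refine le_zero_iff.1 (ge_of_tendsto htend ?_)
  filter_upwards [eventually_ne_atTop 0] with m hm
  exact h m (Nat.cast_ne_zero.2 hm) (ENNReal.natCast_ne_top m)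

theorem mutuallySingular_singularPart_of_forall_absolutelyContinuous
    (h : ∀ τ ≤ μ, τ ≤ ρ → τ ≪ σ) : μ.singularPart σ ⟂ₘ ρ := by
  refine Measure.mutuallySingular_of_disjoint fun τ hτ hτρ ↦ ?_
  have hτσ : τ ⟂ₘ σ := (Measure.mutuallySingular_singularPart μ σ).mono hτ le_rfl
  have hac : τ ≪ σ := h τ (hτ.trans (Measure.singularPart_le μ σ)) hτρ
  exact (Measure.eq_zero_of_absolutelyContinuous_of_mutuallySingular hac hτσ).le

theorem absolutelyContinuous_of_forall_isClosed [PseudoMetricSpace X] [BorelSpace X]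
    [IsFiniteMeasure τ] (h : ∀ K : Set X, IsClosed K → σ K = 0 → τ K = 0) : τ ≪ σ := by
  refine Measure.AbsolutelyContinuous.mk fun A hA hσA ↦ ?_
  rw [hA.measure_eq_iSup_isClosed_of_ne_top (measure_ne_top τ A)]
  simp only [ENNReal.iSup_eq_zero]
  exact fun K hKA hK ↦ h K hK (measure_mono_null hKA hσA)

end Measure

section QuasimetricKernel

variable {X : Type*} [MeasurableSpace X]

/-- A kernel whose reciprocal satisfies on `S` the quasi-triangle inequality
`1 / k x z ≤ C * (1 / k x y + 1 / k z y)`, written without division, and whose integrals against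
`σ` are at most one. -/
structure IsQuasimetricKernel (k : X → X → ℝ≥0∞) (σ : Measure X) (S : Set X) (C : ℝ≥0) :
    Prop where
  measurable : Measurable (uncurry k)
  mul_le : ∀ x ∈ S, ∀ y ∈ S, ∀ z ∈ S, k x y * k z y ≤ C * k x z * (k x y + k z y)
  lintegral_le_one : ∀ x ∈ S, ∫⁻ y, k x y ∂σ ≤ 1

theorem lintegral_sq_lintegral {k : X → X → ℝ≥0∞} (hk : Measurable (uncurry k))
    (σ ν : Measure X) [SFinite σ] [SFinite ν] :
    ∫⁻ y, (∫⁻ x, k x y ∂ν) ^ 2 ∂σ = ∫⁻ x, ∫⁻ z, ∫⁻ y, k x y * k z y ∂σ ∂ν ∂ν := by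
  have hsq (y : X) : (∫⁻ x, k x y ∂ν) ^ 2 = ∫⁻ x, ∫⁻ z, k x y * k z y ∂ν ∂ν := by
    have hky : Measurable fun x ↦ k x y := hk.of_uncurry_right
    simp_rw [lintegral_const_mul _ hky, lintegral_mul_const _ hky, sq]
  have hprod : Measurable fun p : (X × X) × X ↦ k p.1.2 p.1.1 * k p.2 p.1.1 :=
    (hk.comp (by fun_prop : Measurable fun p : (X × X) × X ↦ (p.1.2, p.1.1))).mul
      (hk.comp (by fun_prop : Measurable fun p : (X × X) × X ↦ (p.2, p.1.1)))
  simp_rw [hsq]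
  rw [lintegral_lintegral_swap hprod.lintegral_prod_right'.aemeasurable]
  refine lintegral_congr fun x ↦ lintegral_lintegral_swap ?_
  exact (hprod.comp (by fun_prop : Measurable fun p : X × X ↦ ((p.1, x), p.2))).aemeasurable

namespace IsQuasimetricKernel

variable {k : X → X → ℝ≥0∞} {σ ν : Measure X} {S : Set X} {C : ℝ≥0}

theorem lintegral_mul_le (hk : IsQuasimetricKernel k σ S C) (hσ : ∀ᵐ y ∂σ, y ∈ S) {x z : X}
    (hx : x ∈ S) (hz : z ∈ S) : ∫⁻ y, k x y * k z y ∂σ ≤ 2 * C * k x z := by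
  have hmeas (w : X) : Measurable (k w) := hk.measurable.of_uncurry_left
  calc ∫⁻ y, k x y * k z y ∂σ
      ≤ ∫⁻ y, C * k x z * (k x y + k z y) ∂σ :=
        lintegral_mono_ae (hσ.mono fun y hy ↦ hk.mul_le x hx y hy z hz)
    _ = C * k x z * (∫⁻ y, k x y ∂σ + ∫⁻ y, k z y ∂σ) := by
        rw [lintegral_const_mul _ (by fun_prop), lintegral_add_left (hmeas x)]
    _ ≤ C * k x z * (1 + 1) := by
        gcongr
        exacts [hk.lintegral_le_one x hx, hk.lintegral_le_one z hz]
    _ = 2 * C * k x z := by ring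

theorem lintegral_sq_lintegral_le [SFinite σ] [SFinite ν] (hk : IsQuasimetricKernel k σ S C)
    (hσ : ∀ᵐ y ∂σ, y ∈ S) (hν : ∀ᵐ x ∂ν, x ∈ S) {M : ℝ≥0∞}
    (hM : ∀ᵐ x ∂ν, ∫⁻ z, k x z ∂ν ≤ M) :
    ∫⁻ y, (∫⁻ x, k x y ∂ν) ^ 2 ∂σ ≤ 2 * C * M * ν univ := by
  calc ∫⁻ y, (∫⁻ x, k x y ∂ν) ^ 2 ∂σ
      = ∫⁻ x, ∫⁻ z, ∫⁻ y, k x y * k z y ∂σ ∂ν ∂ν := lintegral_sq_lintegral hk.measurable σ ν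
    _ ≤ ∫⁻ x, 2 * C * ∫⁻ z, k x z ∂ν ∂ν := by
        refine lintegral_mono_ae (hν.mono fun x hx ↦ ?_)
        rw [← lintegral_const_mul _ hk.measurable.of_uncurry_left]
        exact lintegral_mono_ae (hν.mono fun z hz ↦ hk.lintegral_mul_le hσ hx hz)
    _ ≤ ∫⁻ _, 2 * C * M ∂ν := lintegral_mono_ae (hM.mono fun x hx ↦ by gcongr)
    _ = 2 * C * M * ν univ := lintegral_const _

theorem measure_univ_le [SFinite σ] [IsFiniteMeasure ν] (hk : IsQuasimetricKernel k σ S C)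
    (hσ : ∀ᵐ y ∂σ, y ∈ S) (hν : ∀ᵐ x ∂ν, x ∈ S) {M : ℝ≥0∞}
    (hM : ∀ᵐ x ∂ν, ∫⁻ z, k x z ∂ν ≤ M) {V : Set X}
    (hV : ∀ᵐ x ∂ν, 2⁻¹ ≤ ∫⁻ y in V, k x y ∂σ) :
    ν univ ≤ 8 * C * M * σ V := by
  have hmass : 2⁻¹ * ν univ ≤ ∫⁻ y in V, ∫⁻ x, k x y ∂ν ∂σ :=
    calc 2⁻¹ * ν univ = ∫⁻ _, 2⁻¹ ∂ν := (lintegral_const _).symm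
      _ ≤ ∫⁻ x, ∫⁻ y in V, k x y ∂σ ∂ν := lintegral_mono_ae hV
      _ = ∫⁻ y in V, ∫⁻ x, k x y ∂ν ∂σ := lintegral_lintegral_swap hk.measurable.aemeasurable
  have hsq : (2⁻¹ * ν univ) ^ 2 ≤ σ V * (2 * C * M * ν univ) :=
    calc (2⁻¹ * ν univ) ^ 2 ≤ (∫⁻ y in V, ∫⁻ x, k x y ∂ν ∂σ) ^ 2 := by gcongr
      _ ≤ σ V * ∫⁻ y in V, (∫⁻ x, k x y ∂ν) ^ 2 ∂σ := by
          simpa using sq_lintegral_le (μ := σ.restrict V)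
            (hk.measurable.lintegral_prod_left (f := k)).aemeasurable
      _ ≤ σ V * (2 * C * M * ν univ) := by
          gcongr
          exact (setLIntegral_le_lintegral _ _).trans (hk.lintegral_sq_lintegral_le hσ hν hM)
  rcases eq_or_ne (ν univ) 0 with h0 | h0
  · simp [h0]
  refine (ENNReal.mul_le_mul_iff_left h0 (measure_ne_top ν univ)).1 ?_
  calc ν univ * ν univ = (2 * 2⁻¹) ^ 2 * (ν univ * ν univ) := by
        rw [ENNReal.mul_inv_cancel two_ne_zero ENNReal.ofNat_ne_top, one_pow, one_mul]
    _ = 4 * (2⁻¹ * ν univ) ^ 2 := by ring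
    _ ≤ 4 * (σ V * (2 * C * M * ν univ)) := by gcongr
    _ = 8 * C * M * σ V * ν univ := by ring

theorem measure_le_add [SFinite σ] {τ μ ρ : Measure X} [IsFiniteMeasure τ] [SFinite μ]
    (hk : IsQuasimetricKernel k σ S C) (hσ : ∀ᵐ y ∂σ, y ∈ S) (hτ : ∀ᵐ x ∂τ, x ∈ S)
    (hτμ : τ ≤ μ) (hτρ : τ ≤ ρ) {K V : Set X} (hK : MeasurableSet K)
    (hV : ∀ x ∈ K ∩ S, 2⁻¹ ≤ ∫⁻ y in V, k x y ∂σ) {M : ℝ≥0∞} (hM0 : M ≠ 0) (hM : M ≠ ∞) :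
    τ K ≤ 8 * C * M * σ V + (∫⁻ x, ∫⁻ y, k x y ∂μ ∂ρ) / M := by
  have hpot : Measurable fun x ↦ ∫⁻ y, k x y ∂μ := hk.measurable.lintegral_prod_right
  set L := {x | ∫⁻ y, k x y ∂μ ≤ M}
  have hKL : MeasurableSet (K ∩ L) := hK.inter (measurableSet_le hpot measurable_const)
  have hlow : τ (K ∩ L) ≤ 8 * C * M * σ V := by
    have hbound : ∀ᵐ x ∂τ.restrict (K ∩ L), ∫⁻ z, k x z ∂τ.restrict (K ∩ L) ≤ M :=
      ae_restrict_of_forall_mem hKL fun x hx ↦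
        (lintegral_mono' (Measure.restrict_le_self.trans hτμ) le_rfl).trans hx.2
    have hnear : ∀ᵐ x ∂τ.restrict (K ∩ L), 2⁻¹ ≤ ∫⁻ y in V, k x y ∂σ := by
      filter_upwards [ae_restrict_mem hKL, ae_restrict_of_ae hτ] with x hx hxS
      exact hV x ⟨hx.1, hxS⟩
    simpa using hk.measure_univ_le hσ (ae_restrict_of_ae hτ) hbound hnear
  have hhigh : τ {x | M ≤ ∫⁻ y, k x y ∂μ} ≤ (∫⁻ x, ∫⁻ y, k x y ∂μ ∂ρ) / M :=
    (hτρ _).trans (meas_ge_le_lintegral_div hpot.aemeasurable hM0 hM)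
  have hcover : K ⊆ K ∩ L ∪ {x | M ≤ ∫⁻ y, k x y ∂μ} := fun x hx ↦
    (le_total (∫⁻ y, k x y ∂μ) M).imp (fun h ↦ ⟨hx, h⟩) id
  exact (measure_mono hcover).trans ((measure_union_le _ _).trans (add_le_add hlow hhigh))

end IsQuasimetricKernel

variable {Y ι : Type*} [PseudoMetricSpace Y] [MeasurableSpace Y] [BorelSpace Y]
  {μ ρ σ τ : Measure Y} {S : Set Y} {C : ℝ≥0} {l : Filter ι} {k : ι → Y → Y → ℝ≥0∞} {B : ℝ≥0∞}

theorem absolutelyContinuous_of_lintegral_lintegral_le [NeBot l]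
    [IsFiniteMeasure σ] [IsFiniteMeasure τ] [SFinite μ]
    (hσ : ∀ᵐ y ∂σ, y ∈ S) (hτ : ∀ᵐ x ∂τ, x ∈ S) (hτμ : τ ≤ μ) (hτρ : τ ≤ ρ)
    (hk : ∀ᶠ i in l, IsQuasimetricKernel (k i) σ S C)
    (hnear : ∀ δ > 0, ∀ᶠ i in l, ∀ x ∈ S, 2⁻¹ ≤ ∫⁻ y in closedBall x δ, k i x y ∂σ)
    (hB : B ≠ ∞) (hbound : ∀ᶠ i in l, ∫⁻ x, ∫⁻ y, k i x y ∂μ ∂ρ ≤ B) :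
    τ ≪ σ := by
  refine absolutelyContinuous_of_forall_isClosed fun K hK hσK ↦ ?_
  refine eq_zero_of_forall_le_div hB fun M hM0 hM ↦ ?_
  have hthick (δ : ℝ) (hδ : 0 < δ) : τ K ≤ 8 * C * M * σ (cthickening δ K) + B / M := by
    obtain ⟨i, hki, hi, hBi⟩ := (hk.and ((hnear δ hδ).and hbound)).exists
    have hV : ∀ x ∈ K ∩ S, 2⁻¹ ≤ ∫⁻ y in cthickening δ K, k i x y ∂σ := fun x hx ↦
      (hi x hx.2).trans (lintegral_mono_set (closedBall_subset_cthickening hx.1 δ))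
    exact (hki.measure_le_add hσ hτ hτμ hτρ hK.measurableSet hV hM0 hM).trans (by gcongr)
  have hzero : Tendsto (fun δ ↦ σ (cthickening δ K)) (𝓝[>] 0) (𝓝 0) := by
    rw [← hσK]
    exact (tendsto_measure_cthickening_of_isClosed
      ⟨1, one_pos, measure_ne_top σ _⟩ hK).mono_left nhdsWithin_le_nhds
  have hlim : Tendsto (fun δ ↦ 8 * C * M * σ (cthickening δ K) + B / M) (𝓝[>] 0) (𝓝 (B / M)) := by
    simpa using (ENNReal.Tendsto.const_mul hzero (.inr (by finiteness))).add_const (B / M)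
  exact ge_of_tendsto hlim (eventually_mem_nhdsWithin.mono hthick)

end QuasimetricKernel

section OneSubInner

variable {𝕜 E : Type*} [RCLike 𝕜] [SeminormedAddCommGroup E] [InnerProductSpace 𝕜 E] {x y z : E}

theorem sq_norm_sub_add_one_sub_sq_le (x y : E) :
    ‖x - y‖ ^ 2 + (1 - ‖x‖ ^ 2) + (1 - ‖y‖ ^ 2) ≤ 2 * ‖1 - ⟪x, y⟫_𝕜‖ := by
  have hre : 1 - RCLike.re ⟪x, y⟫_𝕜 ≤ ‖1 - ⟪x, y⟫_𝕜‖ := by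
    simpa using RCLike.re_le_norm (1 - ⟪x, y⟫_𝕜)
  rw [norm_sub_sq (𝕜 := 𝕜)]
  linarith

theorem norm_one_sub_inner_le (hx : ‖x‖ ≤ 1) (hy : ‖y‖ ≤ 1) (hz : ‖z‖ ≤ 1) :
    ‖1 - ⟪x, z⟫_𝕜‖ ≤ 2 * (‖1 - ⟪x, y⟫_𝕜‖ + ‖1 - ⟪y, z⟫_𝕜‖) := by
  have hsplit : 1 - ⟪x, z⟫_𝕜 = (1 - ⟪x, y⟫_𝕜) + (1 - ⟪y, z⟫_𝕜) + ⟪x - y, y - z⟫_𝕜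
      - ((1 - ‖y‖ ^ 2 : ℝ) : 𝕜) := by
    simp only [inner_sub_left, inner_sub_right, inner_self_eq_norm_sq_to_K]
    push_cast
    ring
  have hcross : ‖⟪x - y, y - z⟫_𝕜‖ ≤ (‖x - y‖ ^ 2 + ‖y - z‖ ^ 2) / 2 := by
    linarith [norm_inner_le_norm (𝕜 := 𝕜) (x - y) (y - z), two_mul_le_add_sq ‖x - y‖ ‖y - z‖]
  have hy' : ‖((1 - ‖y‖ ^ 2 : ℝ) : 𝕜)‖ = 1 - ‖y‖ ^ 2 :=
    RCLike.norm_of_nonneg (by nlinarith [norm_nonneg y])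
  calc ‖1 - ⟪x, z⟫_𝕜‖
      ≤ ‖1 - ⟪x, y⟫_𝕜‖ + ‖1 - ⟪y, z⟫_𝕜‖ + ‖⟪x - y, y - z⟫_𝕜‖
          + ‖((1 - ‖y‖ ^ 2 : ℝ) : 𝕜)‖ := by
        rw [hsplit]
        exact (norm_sub_le _ _).trans (by gcongr; exact norm_add₃_le)
    _ ≤ 2 * (‖1 - ⟪x, y⟫_𝕜‖ + ‖1 - ⟪y, z⟫_𝕜‖) := by
        have hxy := sq_norm_sub_add_one_sub_sq_le (𝕜 := 𝕜) x y
        have hyz := sq_norm_sub_add_one_sub_sq_le (𝕜 := 𝕜) y z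
        have hx2 : ‖x‖ ^ 2 ≤ 1 := pow_le_one₀ (norm_nonneg x) hx
        have hz2 : ‖z‖ ^ 2 ≤ 1 := pow_le_one₀ (norm_nonneg z) hz
        linarith

theorem one_sub_norm_mul_norm_le (x y : E) : 1 - ‖x‖ * ‖y‖ ≤ ‖1 - ⟪x, y⟫_𝕜‖ :=
  calc 1 - ‖x‖ * ‖y‖ ≤ ‖(1 : 𝕜)‖ - ‖⟪x, y⟫_𝕜‖ := by
        rw [norm_one]
        gcongr
        exact norm_inner_le_norm x y
    _ ≤ ‖1 - ⟪x, y⟫_𝕜‖ := norm_sub_norm_le _ _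

theorem one_sub_inner_ne_zero (hx : ‖x‖ ≤ 1) (hy : ‖y‖ < 1) : 1 - ⟪x, y⟫_𝕜 ≠ 0 := by
  have hlt : ‖x‖ * ‖y‖ < 1 := mul_lt_one_of_nonneg_of_lt_one_right hx (norm_nonneg y) hy
  exact norm_pos_iff.1 ((sub_pos.2 hlt).trans_le (one_sub_norm_mul_norm_le x y))

theorem norm_one_sub_inner_comm (x y : E) : ‖1 - ⟪x, y⟫_𝕜‖ = ‖1 - ⟪y, x⟫_𝕜‖ := by
  rw [← RCLike.norm_conj, map_sub, map_one, inner_conj_symm]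

theorem norm_one_sub_inner_smul_le {r : ℝ} (h0 : 0 ≤ r) (h1 : r ≤ 1) (hx : ‖x‖ ≤ 1)
    (hy : ‖y‖ ≤ 1) (hz : ‖z‖ ≤ 1) :
    ‖1 - ⟪x, (r : 𝕜) • z⟫_𝕜‖ ≤ 2 * (‖1 - ⟪x, (r : 𝕜) • y⟫_𝕜‖ + ‖1 - ⟪y, (r : 𝕜) • z⟫_𝕜‖) := by
  have hsqrt (u v : E) : ⟪u, (r : 𝕜) • v⟫_𝕜 = ⟪((√r : ℝ) : 𝕜) • u, ((√r : ℝ) : 𝕜) • v⟫_𝕜 := by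
    rw [inner_smul_left, inner_smul_right, inner_smul_right, RCLike.conj_ofReal, ← mul_assoc,
      ← RCLike.ofReal_mul, Real.mul_self_sqrt h0]
  have hball {u : E} (hu : ‖u‖ ≤ 1) : ‖((√r : ℝ) : 𝕜) • u‖ ≤ 1 := by
    rw [norm_smul, RCLike.norm_of_nonneg (Real.sqrt_nonneg r)]
    exact mul_le_one₀ (Real.sqrt_le_one.2 h1) (norm_nonneg u) hu
  simpa only [hsqrt] using norm_one_sub_inner_le (𝕜 := 𝕜) (hball hx) (hball hy) (hball hz)

theorem exists_linearIsometryEquiv_apply_eq {E : Type*} [NormedAddCommGroup E]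
    [InnerProductSpace 𝕜 E] [FiniteDimensional 𝕜 E] {x y : E} (h : ‖x‖ = ‖y‖) :
    ∃ U : E ≃ₗᵢ[𝕜] E, U x = y := by
  rcases eq_or_ne x 0 with rfl | hx
  · exact ⟨.refl 𝕜 E, (norm_eq_zero.1 (by simpa using h.symm)).symm⟩
  obtain ⟨e, he⟩ : ∃ e : 𝕜 ≃ₗ[𝕜] 𝕜 ∙ x, ∀ c, (e c : E) = c • x :=
    ⟨LinearEquiv.toSpanNonzeroSingleton 𝕜 E x hx, fun _ ↦ rfl⟩
  let L : 𝕜 ∙ x →ₗᵢ[𝕜] E :=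
    { LinearMap.toSpanSingleton 𝕜 E y ∘ₗ e.symm with
      norm_map' := fun u ↦ by
        obtain ⟨c, rfl⟩ := e.surjective u
        simp [norm_smul, he, h] }
  refine ⟨L.extend.toLinearIsometryEquiv rfl, ?_⟩
  have hLx : L (e 1) = y := by simp [L]
  simpa [he, hLx] using L.extend_apply (e 1)

end OneSubInner

theorem div_pow_mul_div_pow_le {a b d T : ℝ} (ha : 0 < a) (hb : 0 < b) (hd : 0 < d)
    (h : d ≤ 2 * (a + b)) (m : ℕ) :
    T / a ^ m * (T / b ^ m) ≤ 4 ^ m * (T / d ^ m) * (T / a ^ m + T / b ^ m) := by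
  have hpow : d ^ m ≤ 4 ^ m * (a ^ m + b ^ m) :=
    calc d ^ m ≤ (2 * (a + b)) ^ m := by gcongr
      _ = 2 ^ m * (a + b) ^ m := mul_pow _ _ _
      _ ≤ 2 ^ m * (2 ^ (m - 1) * (a ^ m + b ^ m)) := by gcongr; exact add_pow_le ha.le hb.le m
      _ ≤ 2 ^ m * (2 ^ m * (a ^ m + b ^ m)) := by
        gcongr
        exacts [one_le_two, m.sub_le 1]
      _ = 4 ^ m * (a ^ m + b ^ m) := by rw [← mul_assoc, ← mul_pow]; norm_num
  calc T / a ^ m * (T / b ^ m) = d ^ m * (T ^ 2 / (a ^ m * b ^ m * d ^ m)) := by field_simp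
    _ ≤ 4 ^ m * (a ^ m + b ^ m) * (T ^ 2 / (a ^ m * b ^ m * d ^ m)) := by gcongr
    _ = 4 ^ m * (T / d ^ m) * (T / a ^ m + T / b ^ m) := by field_simp; ring

section BallPoissonKernel

variable {E : Type*} [NormedAddCommGroup E] [InnerProductSpace ℂ E] {z ζ ξ : E} {r : ℝ}

/-- The Poisson–Szegő kernel `C(z, ζ) C(ζ, z) / C(z, z)` of the unit ball; the product `⟨z, ζ⟩`,
linear in `z`, is `⟪ζ, z⟫_ℂ`. -/
noncomputable def ballPoissonKernel (z ζ : E) : ℝ :=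
  (1 - ‖z‖ ^ 2) ^ finrank ℂ E / ‖1 - ⟪ζ, z⟫_ℂ‖ ^ (2 * finrank ℂ E)

theorem ballPoissonKernel_nonneg (hz : ‖z‖ ≤ 1) (ζ : E) : 0 ≤ ballPoissonKernel z ζ := by
  have : 0 ≤ 1 - ‖z‖ ^ 2 := sub_nonneg.2 (pow_le_one₀ (norm_nonneg z) hz)
  unfold ballPoissonKernel
  positivity

theorem ballPoissonKernel_zero_left (ζ : E) : ballPoissonKernel 0 ζ = 1 := by
  simp [ballPoissonKernel]

theorem ballPoissonKernel_map (U : E ≃ₗᵢ[ℂ] E) (z ζ : E) :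
    ballPoissonKernel (U z) (U ζ) = ballPoissonKernel z ζ := by
  simp [ballPoissonKernel]

theorem ballPoissonKernel_smul_comm (h : ‖ζ‖ = ‖ξ‖) (r : ℝ) :
    ballPoissonKernel ((r : ℂ) • ζ) ξ = ballPoissonKernel ((r : ℂ) • ξ) ζ := by
  have hinner : ⟪ζ, (r : ℂ) • ξ⟫_ℂ = ⟪(r : ℂ) • ζ, ξ⟫_ℂ := by
    rw [inner_smul_right, inner_smul_left, conj_ofReal]
  simp only [ballPoissonKernel, norm_smul, h, hinner, norm_one_sub_inner_comm ξ]

theorem ballPoissonKernel_le_of_le_norm_sub (hz : ‖z‖ ≤ 1) (hζ : ‖ζ‖ ≤ 1) {δ : ℝ} (hδ : 0 < δ)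
    (h : δ ≤ ‖ζ - z‖) :
    ballPoissonKernel z ζ ≤ (1 - ‖z‖ ^ 2) ^ finrank ℂ E / (δ ^ 2 / 2) ^ (2 * finrank ℂ E) := by
  have hz2 : 0 ≤ 1 - ‖z‖ ^ 2 := sub_nonneg.2 (pow_le_one₀ (norm_nonneg z) hz)
  have hζ2 : 0 ≤ 1 - ‖ζ‖ ^ 2 := sub_nonneg.2 (pow_le_one₀ (norm_nonneg ζ) hζ)
  have hden : δ ^ 2 / 2 ≤ ‖1 - ⟪ζ, z⟫_ℂ‖ := by
    have hsq : δ ^ 2 ≤ ‖ζ - z‖ ^ 2 := by gcongr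
    linarith [sq_norm_sub_add_one_sub_sq_le (𝕜 := ℂ) ζ z]
  unfold ballPoissonKernel
  gcongr

theorem continuousOn_ballPoissonKernel (hz : ‖z‖ < 1) :
    ContinuousOn (ballPoissonKernel z) (closedBall 0 1) := by
  refine ContinuousOn.div (by fun_prop) (by fun_prop) fun ζ hζ ↦ ?_
  exact pow_ne_zero _ (norm_ne_zero_iff.2 (one_sub_inner_ne_zero (by simpa using hζ) hz))

theorem ballPoissonKernel_mul_le {x y z : E} (h0 : 0 ≤ r) (h1 : r < 1) (hx : ‖x‖ = 1)
    (hy : ‖y‖ = 1) (hz : ‖z‖ = 1) :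
    ballPoissonKernel ((r : ℂ) • x) y * ballPoissonKernel ((r : ℂ) • z) y ≤
      4 ^ (2 * finrank ℂ E) * ballPoissonKernel ((r : ℂ) • x) z *
        (ballPoissonKernel ((r : ℂ) • x) y + ballPoissonKernel ((r : ℂ) • z) y) := by
  have hnorm {u : E} (hu : ‖u‖ = 1) : ‖(r : ℂ) • u‖ = r := by
    simp [norm_smul, hu, abs_of_nonneg h0]
  have hpos {u v : E} (hu : ‖u‖ = 1) (hv : ‖v‖ = 1) : 0 < ‖1 - ⟪v, (r : ℂ) • u⟫_ℂ‖ :=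
    norm_pos_iff.2 (one_sub_inner_ne_zero hv.le ((hnorm hu).trans_lt h1))
  have htri : ‖1 - ⟪z, (r : ℂ) • x⟫_ℂ‖ ≤
      2 * (‖1 - ⟪y, (r : ℂ) • x⟫_ℂ‖ + ‖1 - ⟪z, (r : ℂ) • y⟫_ℂ‖) := by
    rw [add_comm ‖1 - ⟪y, (r : ℂ) • x⟫_ℂ‖]
    exact norm_one_sub_inner_smul_le h0 h1.le hz.le hy.le hx.le
  rw [ballPoissonKernel_smul_comm (hz.trans hy.symm)]
  simp only [ballPoissonKernel, hnorm hx, hnorm hy]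
  exact div_pow_mul_div_pow_le (hpos hx hy) (hpos hy hz) (hpos hx hz) htri _

theorem measurable_ballPoissonKernel [FiniteDimensional ℂ E] [MeasurableSpace E] [BorelSpace E] :
    Measurable fun p : E × E ↦ ballPoissonKernel p.1 p.2 := by
  refine Measurable.div ?_ ?_ <;> exact Continuous.measurable (by fun_prop)

end BallPoissonKernel

section DilatedPoissonKernel

variable {E : Type*} [NormedAddCommGroup E] [InnerProductSpace ℂ E] {ζ ξ : E} {r : ℝ}

/-- The Poisson–Szegő kernel `P(rζ, ξ)`, viewed as a kernel on the unit sphere that approximates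
the identity as `r → 1`. -/
noncomputable def dilatedPoissonKernel (r : ℝ) (ζ ξ : E) : ℝ≥0∞ :=
  ENNReal.ofReal (ballPoissonKernel ((r : ℂ) • ζ) ξ)

theorem dilatedPoissonKernel_comm (h : ‖ζ‖ = ‖ξ‖) (r : ℝ) :
    dilatedPoissonKernel r ζ ξ = dilatedPoissonKernel r ξ ζ :=
  congrArg ENNReal.ofReal (ballPoissonKernel_smul_comm h r)

theorem dilatedPoissonKernel_map (U : E ≃ₗᵢ[ℂ] E) (r : ℝ) (ζ ξ : E) :
    dilatedPoissonKernel r (U ζ) (U ξ) = dilatedPoissonKernel r ζ ξ := by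
  rw [dilatedPoissonKernel, ← map_smul, ballPoissonKernel_map, dilatedPoissonKernel]

theorem norm_ofReal_smul_of_mem_sphere (h0 : 0 ≤ r) (hζ : ζ ∈ sphere (0 : E) 1) :
    ‖(r : ℂ) • ζ‖ = r := by
  rw [norm_smul, mem_sphere_zero_iff_norm.1 hζ, mul_one, norm_real, Real.norm_of_nonneg h0]

theorem eventually_dilatedPoissonKernel_le [FiniteDimensional ℂ E] [Nontrivial E] {δ : ℝ}
    (hδ : 0 < δ) {ε : ℝ≥0∞} (hε : 0 < ε) :
    ∀ᶠ r in 𝓝[<] 1, ∀ ζ ∈ sphere (0 : E) 1, ∀ ξ ∈ sphere (0 : E) 1, δ ≤ ‖ξ - ζ‖ →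
      dilatedPoissonKernel r ζ ξ ≤ ε := by
  let g : ℝ → ℝ := fun r ↦
    (1 - r ^ 2) ^ finrank ℂ E / ((δ / 2) ^ 2 / 2) ^ (2 * finrank ℂ E)
  have hg : Tendsto (fun r ↦ ENNReal.ofReal (g r)) (𝓝[<] 1) (𝓝 0) := by
    have hg1 : g 1 = 0 := by simp [g, finrank_pos.ne']
    have hcont : Continuous fun r ↦ ENNReal.ofReal (g r) :=
      ENNReal.continuous_ofReal.comp (by fun_prop)
    simpa [hg1] using (hcont.tendsto 1).mono_left nhdsWithin_le_nhds
  have hpos : ∀ᶠ r : ℝ in 𝓝[<] 1, max 0 (1 - δ / 2) < r :=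
    nhdsWithin_le_nhds (eventually_gt_nhds (max_lt one_pos (by linarith)))
  filter_upwards [hpos, eventually_mem_nhdsWithin, hg.eventually_le_const hε]
    with r hr hr1 hgr ζ hζ ξ hξ hd
  obtain ⟨h0, hrδ⟩ := max_lt_iff.1 hr
  have hnorm := norm_ofReal_smul_of_mem_sphere h0.le hζ
  have hradial : ‖(r : ℂ) • ζ - ζ‖ = 1 - r := by
    have hsmul : (r : ℂ) • ζ - ζ = ((r - 1 : ℝ) : ℂ) • ζ := by simp [sub_smul]
    rw [hsmul, norm_smul, mem_sphere_zero_iff_norm.1 hζ, mul_one, norm_real,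
      Real.norm_of_nonpos (sub_nonpos.2 hr1.le), neg_sub]
  have hfar : δ / 2 ≤ ‖ξ - (r : ℂ) • ζ‖ := by
    linarith [norm_sub_le_norm_sub_add_norm_sub ξ ((r : ℂ) • ζ) ζ]
  have hle := ballPoissonKernel_le_of_le_norm_sub (hnorm.trans_le hr1.le)
    (mem_sphere_zero_iff_norm.1 hξ).le (half_pos hδ) hfar
  rw [hnorm] at hle
  exact (ENNReal.ofReal_le_ofReal hle).trans hgr

variable [FiniteDimensional ℂ E] [MeasurableSpace E] [BorelSpace E]

theorem measurable_dilatedPoissonKernel (r : ℝ) :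
    Measurable (uncurry (dilatedPoissonKernel (E := E) r)) := by
  have hdil : Measurable fun p : E × E ↦ ((r : ℂ) • p.1, p.2) := by fun_prop
  exact (measurable_ballPoissonKernel.comp hdil).ennreal_ofReal

theorem isQuasimetricKernel_dilatedPoissonKernel {σ : Measure E} (h0 : 0 ≤ r) (h1 : r < 1)
    (hσ : ∀ ζ ∈ sphere (0 : E) 1, ∫⁻ ξ, dilatedPoissonKernel r ζ ξ ∂σ = 1) :
    IsQuasimetricKernel (dilatedPoissonKernel r) σ (sphere 0 1) (4 ^ (2 * finrank ℂ E)) where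
  measurable := measurable_dilatedPoissonKernel r
  mul_le x hx y hy z hz := by
    have hP {u : E} (hu : u ∈ sphere (0 : E) 1) (v : E) :
        0 ≤ ballPoissonKernel ((r : ℂ) • u) v :=
      ballPoissonKernel_nonneg ((norm_ofReal_smul_of_mem_sphere h0 hu).trans_le h1.le) v
    have h := ENNReal.ofReal_le_ofReal (ballPoissonKernel_mul_le h0 h1
      (mem_sphere_zero_iff_norm.1 hx) (mem_sphere_zero_iff_norm.1 hy)
      (mem_sphere_zero_iff_norm.1 hz))
    rw [ENNReal.ofReal_mul (hP hx y), ENNReal.ofReal_mul (mul_nonneg (by positivity) (hP hx z)),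
      ENNReal.ofReal_mul (by positivity), ENNReal.ofReal_add (hP hx y) (hP hz y),
      ENNReal.ofReal_pow zero_le_four, ENNReal.ofReal_ofNat] at h
    simpa [dilatedPoissonKernel] using h
  lintegral_le_one x hx := (hσ x hx).le

theorem eventually_inv_two_le_setLIntegral_dilatedPoissonKernel [Nontrivial E] {σ : Measure E}
    [IsProbabilityMeasure σ] (hσS : ∀ᵐ ξ ∂σ, ξ ∈ sphere 0 1)
    (hσ : ∀ᶠ r in 𝓝[<] 1, ∀ ζ ∈ sphere (0 : E) 1, ∫⁻ ξ, dilatedPoissonKernel r ζ ξ ∂σ = 1)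
    {δ : ℝ} (hδ : 0 < δ) :
    ∀ᶠ r in 𝓝[<] 1, ∀ ζ ∈ sphere (0 : E) 1,
      2⁻¹ ≤ ∫⁻ ξ in closedBall ζ δ, dilatedPoissonKernel r ζ ξ ∂σ := by
  have hhalf : (0 : ℝ≥0∞) < 2⁻¹ := by simp
  filter_upwards [hσ, eventually_dilatedPoissonKernel_le (E := E) hδ hhalf] with r hr hfar ζ hζ
  refine inv_two_le_setLIntegral (hr ζ hζ) measurableSet_closedBall (hσS.mono fun ξ hξ hξδ ↦ ?_)
  rw [mem_closedBall_iff_norm, not_le] at hξδ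
  exact hfar ζ hζ ξ hξ hξδ.le

end DilatedPoissonKernel

section RepresentsOrigin

variable {E G : Type*} [NormedAddCommGroup E] [NormedSpace ℂ E] [NormedAddCommGroup G]
  [NormedSpace ℂ G]

theorem diffContOnCl_comp_smul {F : E → G} (hF : DifferentiableOn ℂ F (ball 0 1)) {c : ℂ}
    (hc : ‖c‖ < 1) : DiffContOnCl ℂ (fun z ↦ F (c • z)) (ball 0 1) := by
  refine DifferentiableOn.diffContOnCl ?_
  rw [closure_ball _ one_ne_zero]
  refine hF.comp (by fun_prop) fun z hz ↦ ?_
  rw [mem_ball_zero_iff, norm_smul]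
  exact mul_lt_one_of_nonneg_of_lt_one_left (norm_nonneg c) hc (by simpa using hz)

theorem circleAverage_smul_eq [CompleteSpace G] {f : E → G} (hf : DiffContOnCl ℂ f (ball 0 1))
    {ζ : E} (hζ : ‖ζ‖ = 1) : Real.circleAverage (fun c ↦ f (c • ζ)) 0 1 = f 0 := by
  have hslice : DiffContOnCl ℂ (fun c : ℂ ↦ f (c • ζ)) (ball 0 |1|) := by
    have hline : DiffContOnCl ℂ (fun c : ℂ ↦ c • ζ) (ball 0 |1|) :=
      Differentiable.diffContOnCl (by fun_prop)
    refine hf.comp hline fun c hc ↦ ?_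
    simpa [norm_smul, hζ] using hc
  simpa using hslice.circleAverage

/-- A measure on the unit sphere that represents the origin for the ball algebra, whose elements
are encoded as functions on the whole space that are `DiffContOnCl` on the open ball. -/
def RepresentsOrigin [MeasurableSpace E] (ρ : Measure E) : Prop :=
  ∀ f : E → ℂ, DiffContOnCl ℂ f (ball 0 1) → ∫ ζ, f ζ ∂ρ = f 0

theorem representsOrigin_of_map_smul_eq [MeasurableSpace E] [BorelSpace E]
    [FiniteDimensional ℂ E] {σ : Measure E} [IsProbabilityMeasure σ]
    (hσS : ∀ᵐ ζ ∂σ, ζ ∈ sphere 0 1) (hσ : ∀ c : ℂ, ‖c‖ = 1 → σ.map (c • ·) = σ) :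
    RepresentsOrigin σ := by
  intro f hf
  have hrot (c : ℂ) (hc : ‖c‖ = 1) : ∫ ζ, f (c • ζ) ∂σ = ∫ ζ, f ζ ∂σ := by
    have hc0 : c ≠ 0 := norm_ne_zero_iff.1 (hc.trans_ne one_ne_zero)
    nth_rw 2 [← hσ c hc]
    exact ((Homeomorph.smulOfNeZero c hc0).measurableEmbedding.integral_map f).symm
  have hint : Integrable (uncurry fun (θ : ℝ) ζ ↦ f (circleMap 0 1 θ • ζ))
      ((volume.restrict (Set.uIoc 0 (2 * Real.pi))).prod σ) := by
    have hcont : ContinuousOn (uncurry fun (θ : ℝ) ζ ↦ f (circleMap 0 1 θ • ζ))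
        (Set.uIcc 0 (2 * Real.pi) ×ˢ sphere 0 1) := by
      refine hf.continuousOn_ball.comp (by fun_prop) fun p hp ↦ ?_
      simpa [norm_smul] using (mem_sphere_zero_iff_norm.1 hp.2).le
    rw [← Measure.restrict_eq_self_of_ae_mem hσS, Measure.prod_restrict]
    exact (hcont.integrableOn_compact (isCompact_uIcc.prod (isCompact_sphere 0 1))).mono_set
      (prod_mono_left uIoc_subset_uIcc)
  calc ∫ ζ, f ζ ∂σ = Real.circleAverage (fun c ↦ ∫ ζ, f (c • ζ) ∂σ) 0 1 :=
        (Real.circleAverage_const_on_circle fun c hc ↦ hrot c (by simpa using hc)).symm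
    _ = ∫ ζ, Real.circleAverage (fun c ↦ f (c • ζ)) 0 1 ∂σ := by
        simp only [Real.circleAverage_def]
        rw [integral_smul, intervalIntegral_integral_swap hint]
    _ = ∫ _, f 0 ∂σ := integral_congr_ae <| hσS.mono fun ζ hζ ↦
        circleAverage_smul_eq hf (mem_sphere_zero_iff_norm.1 hζ)
    _ = f 0 := by simp

end RepresentsOrigin

section PluriharmonicMeasure

variable {E : Type*} [NormedAddCommGroup E] [InnerProductSpace ℂ E]
  [MeasurableSpace E] {μ σ τ : Measure E} {r : ℝ}

/-- A measure on the unit sphere whose Poisson integral is the real part of a holomorphic function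
on the ball, which for the simply connected ball says that it is pluriharmonic. -/
def IsPluriharmonicMeasure (μ : Measure E) : Prop :=
  ∃ F : E → ℂ, DifferentiableOn ℂ F (ball 0 1) ∧
    ∀ z ∈ ball (0 : E) 1, ∫ ζ, ballPoissonKernel z ζ ∂μ = (F z).re

variable [BorelSpace E] [FiniteDimensional ℂ E]

theorem integrable_ballPoissonKernel [IsFiniteMeasure μ] (hμ : ∀ᵐ ζ ∂μ, ζ ∈ sphere 0 1) {z : E}
    (hz : ‖z‖ < 1) : Integrable (ballPoissonKernel z) μ :=
  integrable_of_continuousOn_of_ae_mem (isCompact_sphere 0 1)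
    ((continuousOn_ballPoissonKernel hz).mono sphere_subset_closedBall) hμ

theorem IsPluriharmonicMeasure.lintegral_lintegral_dilatedPoissonKernel [IsFiniteMeasure μ]
    [IsFiniteMeasure τ] (hμ : IsPluriharmonicMeasure μ) (hμS : ∀ᵐ ξ ∂μ, ξ ∈ sphere 0 1)
    (hτ : RepresentsOrigin τ) (hτS : ∀ᵐ ζ ∂τ, ζ ∈ sphere 0 1) (h0 : 0 ≤ r) (h1 : r < 1) :
    ∫⁻ ζ, ∫⁻ ξ, dilatedPoissonKernel r ζ ξ ∂μ ∂τ = μ univ := by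
  obtain ⟨F, hF, hFμ⟩ := hμ
  have hr : ‖(r : ℂ)‖ < 1 := by rwa [norm_real, Real.norm_of_nonneg h0]
  have hdil := diffContOnCl_comp_smul hF hr
  have hint : Integrable (fun ζ ↦ F ((r : ℂ) • ζ)) τ :=
    integrable_of_continuousOn_of_ae_mem (isCompact_sphere 0 1)
      (hdil.continuousOn_ball.mono sphere_subset_closedBall) hτS
  have hnorm {ζ : E} (hζ : ζ ∈ sphere (0 : E) 1) : ‖(r : ℂ) • ζ‖ < 1 :=
    (norm_ofReal_smul_of_mem_sphere h0 hζ).trans_lt h1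
  have hpos {z : E} (hz : ‖z‖ < 1) : 0 ≤ (F z).re := by
    rw [← hFμ z (by simpa using hz)]
    exact integral_nonneg (ballPoissonKernel_nonneg hz.le)
  have hinner (ζ : E) (hζ : ζ ∈ sphere (0 : E) 1) :
      ∫⁻ ξ, dilatedPoissonKernel r ζ ξ ∂μ = ENNReal.ofReal (F ((r : ℂ) • ζ)).re := by
    rw [← hFμ _ (by simpa using hnorm hζ), ofReal_integral_eq_lintegral_ofReal
      (integrable_ballPoissonKernel hμS (hnorm hζ))
      (.of_forall (ballPoissonKernel_nonneg (hnorm hζ).le))]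
    rfl
  calc ∫⁻ ζ, ∫⁻ ξ, dilatedPoissonKernel r ζ ξ ∂μ ∂τ
      = ∫⁻ ζ, ENNReal.ofReal (F ((r : ℂ) • ζ)).re ∂τ := lintegral_congr_ae (hτS.mono hinner)
    _ = ENNReal.ofReal (∫ ζ, (F ((r : ℂ) • ζ)).re ∂τ) :=
        (ofReal_integral_eq_lintegral_ofReal hint.re (hτS.mono fun ζ hζ ↦ hpos (hnorm hζ))).symm
    _ = ENNReal.ofReal (∫ ζ, F ((r : ℂ) • ζ) ∂τ).re := congrArg _ (integral_re hint)
    _ = ENNReal.ofReal (F 0).re := by rw [hτ _ hdil, smul_zero]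
    _ = μ univ := by simp [← hFμ 0 (by simp), ballPoissonKernel_zero_left]

theorem lintegral_dilatedPoissonKernel_congr (hσ : ∀ U : E ≃ₗᵢ[ℂ] E, σ.map U = σ) {ζ ξ : E}
    (h : ‖ζ‖ = ‖ξ‖) (r : ℝ) :
    ∫⁻ η, dilatedPoissonKernel r ζ η ∂σ = ∫⁻ η, dilatedPoissonKernel r ξ η ∂σ := by
  obtain ⟨U, rfl⟩ := exists_linearIsometryEquiv_apply_eq (𝕜 := ℂ) h
  conv_rhs => rw [← hσ U, lintegral_map
    (measurable_dilatedPoissonKernel r).of_uncurry_left U.continuous.measurable]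
  simp only [dilatedPoissonKernel_map]

theorem representsOrigin_of_map_eq [IsProbabilityMeasure σ] (hσS : ∀ᵐ ζ ∂σ, ζ ∈ sphere 0 1)
    (hσ : ∀ U : E ≃ₗᵢ[ℂ] E, σ.map U = σ) : RepresentsOrigin σ :=
  representsOrigin_of_map_smul_eq hσS fun c hc ↦ by
    have hmem : c ∈ unitary ℂ := Unitary.mem_iff_star_mul_self.2 (by simp [conj_mul', hc])
    exact hσ ((⟨c, hmem⟩ : unitary ℂ) • LinearIsometryEquiv.refl ℂ E)

-- The normalization `∫ P(rζ, ·) dσ = 1` is read off from `μ`: by symmetry and unitary invariance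
-- the integral is constant on the sphere, and averaging it against `μ` gives `μ univ`.
theorem IsPluriharmonicMeasure.lintegral_dilatedPoissonKernel_eq_one [IsFiniteMeasure μ]
    [NeZero μ] [IsProbabilityMeasure σ] (hμ : IsPluriharmonicMeasure μ)
    (hμS : ∀ᵐ ξ ∂μ, ξ ∈ sphere 0 1) (hσS : ∀ᵐ ζ ∂σ, ζ ∈ sphere 0 1)
    (hσ : ∀ U : E ≃ₗᵢ[ℂ] E, σ.map U = σ) (h0 : 0 ≤ r) (h1 : r < 1) {ζ : E}
    (hζ : ζ ∈ sphere (0 : E) 1) : ∫⁻ ξ, dilatedPoissonKernel r ζ ξ ∂σ = 1 := by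
  have hnorm {ξ η : E} (hξ : ξ ∈ sphere (0 : E) 1) (hη : η ∈ sphere (0 : E) 1) : ‖ξ‖ = ‖η‖ :=
    (mem_sphere_zero_iff_norm.1 hξ).trans (mem_sphere_zero_iff_norm.1 hη).symm
  have hconst (ξ : E) (hξ : ξ ∈ sphere (0 : E) 1) :
      ∫⁻ η, dilatedPoissonKernel r η ξ ∂σ = ∫⁻ η, dilatedPoissonKernel r ζ η ∂σ := by
    rw [← lintegral_dilatedPoissonKernel_congr hσ (hnorm hξ hζ) r]
    exact lintegral_congr_ae (hσS.mono fun η hη ↦ dilatedPoissonKernel_comm (hnorm hη hξ) r)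
  have hmass : (∫⁻ η, dilatedPoissonKernel r ζ η ∂σ) * μ univ = μ univ :=
    calc (∫⁻ η, dilatedPoissonKernel r ζ η ∂σ) * μ univ
        = ∫⁻ _, ∫⁻ η, dilatedPoissonKernel r ζ η ∂σ ∂μ := (lintegral_const _).symm
      _ = ∫⁻ ξ, ∫⁻ η, dilatedPoissonKernel r η ξ ∂σ ∂μ :=
          lintegral_congr_ae (hμS.mono fun ξ hξ ↦ (hconst ξ hξ).symm)
      _ = ∫⁻ η, ∫⁻ ξ, dilatedPoissonKernel r η ξ ∂μ ∂σ :=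
          (lintegral_lintegral_swap (measurable_dilatedPoissonKernel r).aemeasurable).symm
      _ = μ univ := hμ.lintegral_lintegral_dilatedPoissonKernel hμS
          (representsOrigin_of_map_eq hσS hσ) hσS h0 h1
  exact (ENNReal.mul_eq_right (NeZero.ne _) (measure_ne_top μ univ)).1 hmass

end PluriharmonicMeasure

theorem stmt11_general {E : Type*} [NormedAddCommGroup E] [InnerProductSpace ℂ E]
    [FiniteDimensional ℂ E] [MeasurableSpace E] [BorelSpace E] {σ μ ρ : Measure E}
    [IsProbabilityMeasure σ] [IsFiniteMeasure μ] [IsFiniteMeasure ρ]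
    (hσS : ∀ᵐ ζ ∂σ, ζ ∈ sphere 0 1) (hσ : ∀ U : E ≃ₗᵢ[ℂ] E, σ.map U = σ)
    (hμS : ∀ᵐ ζ ∂μ, ζ ∈ sphere 0 1) (hμ : IsPluriharmonicMeasure μ)
    (hρS : ∀ᵐ ζ ∂ρ, ζ ∈ sphere 0 1) (hρ : RepresentsOrigin ρ) :
    μ.singularPart σ ⟂ₘ ρ := by
  rcases eq_zero_or_neZero μ with rfl | _
  · simp
  have : Nontrivial E := by
    obtain ⟨ζ, hζ⟩ := hσS.exists
    exact nontrivial_of_ne ζ 0 (ne_of_mem_sphere hζ one_ne_zero)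
  have hr : ∀ᶠ r : ℝ in 𝓝[<] 1, 0 ≤ r ∧ r < 1 :=
    (eventually_nhdsWithin_of_eventually_nhds (eventually_ge_nhds one_pos)).and
      eventually_mem_nhdsWithin
  have hone : ∀ᶠ r in 𝓝[<] 1, ∀ ζ ∈ sphere (0 : E) 1, ∫⁻ ξ, dilatedPoissonKernel r ζ ξ ∂σ = 1 :=
    hr.mono fun r hr ζ hζ ↦ hμ.lintegral_dilatedPoissonKernel_eq_one hμS hσS hσ hr.1 hr.2 hζ
  have hkernel := (hr.and hone).mono fun r h ↦
    isQuasimetricKernel_dilatedPoissonKernel h.1.1 h.1.2 h.2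
  have hbound : ∀ᶠ r in 𝓝[<] 1, ∫⁻ ζ, ∫⁻ ξ, dilatedPoissonKernel r ζ ξ ∂μ ∂ρ ≤ μ univ :=
    hr.mono fun r hr ↦ (hμ.lintegral_lintegral_dilatedPoissonKernel hμS hρ hρS hr.1 hr.2).le
  refine mutuallySingular_singularPart_of_forall_absolutelyContinuous fun τ hτμ hτρ ↦ ?_
  have : IsFiniteMeasure τ := isFiniteMeasure_of_le μ hτμ
  exact absolutelyContinuous_of_lintegral_lintegral_le hσS (hμS.filter_mono (ae_mono hτμ)) hτμ hτρ
    hkernel (fun δ ↦ eventually_inv_two_le_setLIntegral_dilatedPoissonKernel hσS hone)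
    (measure_ne_top μ univ) hbound

/-- The singular part of a positive pluriharmonic measure on the unit sphere of `ℂⁿ`
(with respect to normalized surface measure, characterized as the unitarily invariant
probability measure on the sphere) is totally singular: it is mutually singular with every
probability measure representing the origin for the ball algebra. -/
theorem stmt11 (n : ℕ) (hn : 2 ≤ n)
    [MeasurableSpace (EuclideanSpace ℂ (Fin n))]
    [BorelSpace (EuclideanSpace ℂ (Fin n))]
    (Λ : Measure (EuclideanSpace ℂ (Fin n))) (hΛprob : IsProbabilityMeasure Λ)
    (hΛsupp : Λ (sphere (0 : EuclideanSpace ℂ (Fin n)) 1)ᶜ = 0)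
    (hΛinv : ∀ U : EuclideanSpace ℂ (Fin n) ≃ₗᵢ[ℂ] EuclideanSpace ℂ (Fin n),
      Measure.map (⇑U) Λ = Λ)
    (μ : Measure (EuclideanSpace ℂ (Fin n))) (hμfin : IsFiniteMeasure μ)
    (hμsupp : μ (sphere (0 : EuclideanSpace ℂ (Fin n)) 1)ᶜ = 0)
    -- `μ` is pluriharmonic: its Poisson integral is the real part of a holomorphic function
    (hplh : ∃ F : EuclideanSpace ℂ (Fin n) → ℂ,
      DifferentiableOn ℂ F (ball (0 : EuclideanSpace ℂ (Fin n)) 1) ∧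
      ∀ z ∈ ball (0 : EuclideanSpace ℂ (Fin n)) 1,
        ∫ ζ, (1 - ‖z‖ ^ 2) ^ n /
            ‖1 - ∑ i, z i * (starRingEnd ℂ) (ζ i)‖ ^ (2 * n) ∂μ = (F z).re) :
    ∀ ρ : Measure (EuclideanSpace ℂ (Fin n)), IsProbabilityMeasure ρ →
      ρ (sphere (0 : EuclideanSpace ℂ (Fin n)) 1)ᶜ = 0 →
      (∀ f : EuclideanSpace ℂ (Fin n) → ℂ,
        ContinuousOn f (closedBall (0 : EuclideanSpace ℂ (Fin n)) 1) →
        DifferentiableOn ℂ f (ball (0 : EuclideanSpace ℂ (Fin n)) 1) →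
        ∫ ζ, f ζ ∂ρ = f 0) →
      μ.singularPart Λ ⟂ₘ ρ := by
  have hinner (z ζ : EuclideanSpace ℂ (Fin n)) : ∑ i, z i * (starRingEnd ℂ) (ζ i) = ⟪ζ, z⟫_ℂ := by
    simp [PiLp.inner_apply]
  intro ρ hρ hρsupp hρrep
  refine stmt11_general hΛsupp hΛinv hμsupp ?_ hρsupp
    fun f hf ↦ hρrep f hf.continuousOn_ball hf.differentiableOn
  simpa only [IsPluriharmonicMeasure, ballPoissonKernel, finrank_euclideanSpace_fin, hinner]
    using hplh
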